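/- Let k and k̂ be vectors in ℝⁿ with nonnegative entries, and assume k ≠ 0. Then ‖ kkᵀ/‖k‖₁ − (k+k̂)(k+k̂)ᵀ/‖k+k̂‖₁ ‖ ≤ ( ‖k̂‖₁‖k‖₂² + 2‖k‖₁‖k‖₂‖k̂‖₂ + ‖k‖₁‖k̂‖₂² ) / ‖k‖₁². -/

import Mathlib

/-- The spectral norm (ℓ² operator norm) of a real matrix. -/
noncomputable def specNorm {m n : Type*} [Fintype m] [Fintype n] [DecidableEq n]
    (M : Matrix m n ℝ) : ℝ :=
  ‖LinearMap.toContinuousLinearMap (Matrix.toEuclideanLin M)‖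

/-- The ℓ¹ norm of a vector in ℝⁿ. -/
def l1Norm {n : ℕ} (v : Fin n → ℝ) : ℝ := ∑ i, |v i|

/-- The ℓ² (Euclidean) norm of a vector in ℝⁿ. -/
noncomputable def l2Norm {n : ℕ} (v : Fin n → ℝ) : ℝ := Real.sqrt (∑ i, v i ^ 2)

/-!
Write `s = ‖k‖₁` and `t = ‖k + k̂‖₁`. The matrix in question is
`(s⁻¹ - t⁻¹) kkᵀ - t⁻¹ ((k + k̂)(k + k̂)ᵀ - kkᵀ)`. Adding a nonnegative vector to a nonnegative one
does not decrease the ℓ¹ norm, so `s ≤ t`, and both coefficients are controlled by `s`: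
`0 ≤ s⁻¹ - t⁻¹ ≤ (t - s) / s²` and `t⁻¹ ≤ s⁻¹`. The triangle inequality gives `t - s ≤ ‖k̂‖₁`, and
the difference of outer products is a sum of three rank-one matrices, whose spectral norms are
products of ℓ² norms.
-/

section NormedSpace

variable {E : Type*} [SeminormedAddCommGroup E] [NormedSpace ℝ E]

lemma norm_inv_smul_sub_inv_smul_le {s t : ℝ} (hs : 0 < s) (hst : s ≤ t) (x y : E) :
    ‖s⁻¹ • x - t⁻¹ • y‖ ≤ ((t - s) * ‖x‖ + s * ‖y - x‖) / s ^ 2 := by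
  have ht : 0 < t := hs.trans_le hst
  have hinv : t⁻¹ ≤ s⁻¹ := inv_anti₀ hs hst
  have hcoeff : s⁻¹ - t⁻¹ ≤ (t - s) / s ^ 2 := by
    rw [inv_sub_inv hs.ne' ht.ne', sq]
    have : 0 ≤ t - s := sub_nonneg.mpr hst
    gcongr
  calc ‖s⁻¹ • x - t⁻¹ • y‖
      = ‖(s⁻¹ - t⁻¹) • x - t⁻¹ • (y - x)‖ := by congr 1; module
    _ ≤ ‖(s⁻¹ - t⁻¹) • x‖ + ‖t⁻¹ • (y - x)‖ := norm_sub_le _ _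
    _ = (s⁻¹ - t⁻¹) * ‖x‖ + t⁻¹ * ‖y - x‖ := by
      rw [norm_smul_of_nonneg (sub_nonneg.mpr hinv), norm_smul_of_nonneg (inv_nonneg.mpr ht.le)]
    _ ≤ (t - s) / s ^ 2 * ‖x‖ + s⁻¹ * ‖y - x‖ := by gcongr
    _ = ((t - s) * ‖x‖ + s * ‖y - x‖) / s ^ 2 := by field_simp

end NormedSpace

section OuterProduct

open Matrix WithLp
open scoped Matrix.Norms.L2Operator

variable {𝕜 m n : Type*} [RCLike 𝕜] [Fintype m] [Fintype n] [DecidableEq n]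

lemma l2_opNorm_vecMulVec (u : m → 𝕜) (v : n → 𝕜) :
    ‖vecMulVec u v‖ = ‖toLp 2 u‖ * ‖toLp 2 v‖ := by
  have hrank : toEuclideanLin (vecMulVec u v) =
      InnerProductSpace.rankOne 𝕜 (toLp 2 u) (toLp 2 (star v)) := by
    rw [← LinearEquiv.eq_symm_apply, InnerProductSpace.symm_toEuclideanLin_rankOne, star_star]
  have hstar : ‖toLp 2 (star v)‖ = ‖toLp 2 v‖ := by
    simp only [EuclideanSpace.norm_eq, Pi.star_apply, norm_star]
  rw [l2_opNorm_def, LinearEquiv.trans_apply, hrank, ← hstar]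
  exact InnerProductSpace.norm_rankOne _ _

lemma l2_opNorm_vecMulVec_add_add_sub_le (u u' : m → 𝕜) (v v' : n → 𝕜) :
    ‖vecMulVec (u + u') (v + v') - vecMulVec u v‖ ≤
      ‖toLp 2 u‖ * ‖toLp 2 v'‖ + ‖toLp 2 u'‖ * ‖toLp 2 v‖ + ‖toLp 2 u'‖ * ‖toLp 2 v'‖ := by
  have hexpand : vecMulVec (u + u') (v + v') - vecMulVec u v =
      vecMulVec u v' + vecMulVec u' v + vecMulVec u' v' := by
    rw [add_vecMulVec, vecMulVec_add, vecMulVec_add]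
    abel
  simpa only [hexpand, l2_opNorm_vecMulVec] using
    norm_add₃_le (a := vecMulVec u v') (b := vecMulVec u' v) (c := vecMulVec u' v')

lemma specNorm_eq_l2_opNorm (M : Matrix m n ℝ) : specNorm M = ‖M‖ := rfl

end OuterProduct

section VectorNorms

variable {n : ℕ}

lemma l2Norm_eq_norm_toLp (v : Fin n → ℝ) : l2Norm v = ‖WithLp.toLp 2 v‖ := by
  simp only [l2Norm, EuclideanSpace.norm_eq, Real.norm_eq_abs, sq_abs]

lemma l1Norm_pos {v : Fin n → ℝ} (hv : v ≠ 0) : 0 < l1Norm v := by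
  obtain ⟨i, hi⟩ := Function.ne_iff.mp hv
  exact Finset.sum_pos' (fun _ _ ↦ abs_nonneg _) ⟨i, Finset.mem_univ i, abs_pos.mpr hi⟩

lemma l1Norm_add_le (v w : Fin n → ℝ) : l1Norm (v + w) ≤ l1Norm v + l1Norm w :=
  (Finset.sum_le_sum fun i _ ↦ abs_add_le (v i) (w i)).trans_eq Finset.sum_add_distrib

lemma l1Norm_le_l1Norm_of_abs_le_abs {v w : Fin n → ℝ} (h : |v| ≤ |w|) :
    l1Norm v ≤ l1Norm w :=
  Finset.sum_le_sum fun i _ ↦ h i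

end VectorNorms

open Matrix in
open scoped Matrix.Norms.L2Operator in
theorem stmt10_general (n : ℕ) (k khat : Fin n → ℝ) (hk0 : k ≠ 0)
    (hle : l1Norm k ≤ l1Norm (k + khat)) :
    specNorm ((l1Norm k)⁻¹ • vecMulVec k k -
        (l1Norm (k + khat))⁻¹ • vecMulVec (k + khat) (k + khat)) ≤
      (l1Norm khat * (l2Norm k) ^ 2 + 2 * l1Norm k * l2Norm k * l2Norm khat +
        l1Norm k * (l2Norm khat) ^ 2) / (l1Norm k) ^ 2 := by
  have hpos : 0 < l1Norm k := l1Norm_pos hk0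
  have hgrowth : l1Norm (k + khat) - l1Norm k ≤ l1Norm khat :=
    sub_le_iff_le_add'.mpr (l1Norm_add_le k khat)
  have houter : ‖vecMulVec k k‖ = l2Norm k * l2Norm k := by
    rw [l2_opNorm_vecMulVec, l2Norm_eq_norm_toLp]
  have hpert : ‖vecMulVec (k + khat) (k + khat) - vecMulVec k k‖ ≤
      l2Norm k * l2Norm khat + l2Norm khat * l2Norm k + l2Norm khat * l2Norm khat := by
    simpa only [l2Norm_eq_norm_toLp] using l2_opNorm_vecMulVec_add_add_sub_le k khat k khat
  rw [specNorm_eq_l2_opNorm]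
  calc _ ≤ ((l1Norm (k + khat) - l1Norm k) * ‖vecMulVec k k‖ +
          l1Norm k * ‖vecMulVec (k + khat) (k + khat) - vecMulVec k k‖) / l1Norm k ^ 2 :=
        norm_inv_smul_sub_inv_smul_le hpos hle _ _
    _ ≤ (l1Norm khat * (l2Norm k * l2Norm k) + l1Norm k *
          (l2Norm k * l2Norm khat + l2Norm khat * l2Norm k + l2Norm khat * l2Norm khat)) /
        l1Norm k ^ 2 := by
      rw [houter]
      gcongr
      exact mul_self_nonneg _
    _ = _ := by ring

/-- Let k and k̂ be vectors in ℝⁿ with nonnegative entries, k ≠ 0. Then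
‖ kkᵀ/‖k‖₁ − (k+k̂)(k+k̂)ᵀ/‖k+k̂‖₁ ‖ ≤
( ‖k̂‖₁‖k‖₂² + 2‖k‖₁‖k‖₂‖k̂‖₂ + ‖k‖₁‖k̂‖₂² ) / ‖k‖₁². -/
theorem stmt10 (n : ℕ) (k khat : Fin n → ℝ)
    (hk : ∀ i, 0 ≤ k i) (hkhat : ∀ i, 0 ≤ khat i) (hk0 : k ≠ 0) :
    specNorm ((l1Norm k)⁻¹ • Matrix.vecMulVec k k -
        (l1Norm (k + khat))⁻¹ • Matrix.vecMulVec (k + khat) (k + khat)) ≤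
      (l1Norm khat * (l2Norm k) ^ 2 + 2 * l1Norm k * l2Norm k * l2Norm khat +
        l1Norm k * (l2Norm khat) ^ 2) / (l1Norm k) ^ 2 := by
  refine stmt10_general n k khat hk0 (l1Norm_le_l1Norm_of_abs_le_abs fun i ↦ ?_)
  exact abs_le_abs_of_nonneg (hk i) (le_add_of_nonneg_right (hkhat i))
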